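/- Sequence of repainting: suppose Γ ⊢_k t : L is derivable for a checkers term t, and (Γ',L') ⊑^−_{k₁} (Γ,L) for some k₁ ≥ 0. Then there exist a derivation of Γ'' ⊢_{k'} t : L'' and k₂ with 0 ≤ k₂ ≤ k₁ such that (Γ'',L'') ⊑^+_{k₂} (Γ',L') and |k − k'| ≤ k₁ − k₂. -/

import Mathlib

/-!
The proof is by induction on the term, for all typings at once, with the costs on the
environment and on the type tracked separately (`Repaintable`).

* On a variable, the same linear type occurs in the environment and on the right, at opposite
  polarities. Whitenings of opposite polarities touch disjoint arrows, hence commute with their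
  costs (`WhiterL.diamond`), and the corner of the square is the answer.
* On an abstraction, the color of the arrow is fixed by the term and the induction hypothesis
  applies directly to the body.
* On an application, function and argument share a multi type `M` at opposite polarities, and
  the two induction hypotheses are played against each other (`app_loop`): the answer of one
  side on `M` is the challenge to the other. Every round with a nontrivial exchange removes a
  black arrow from `M`, by `WhiterM.black`, so the dialogue stops with the two sides agreeing on
  the shared type. Each side's answer costs no more than the challenge minus the variation of
  its index, so the bounds telescope; the color of the arrow itself may be whitened along the
  way, which changes the index of the application by at most the cost of that whitening.
-/


set_option autoImplicit false

abbrev Var := ℕ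

/-- Colors: white (○) and black (●). -/
inductive Color where
  | white
  | black
deriving DecidableEq

/-- The opposite color. -/
def Color.flip : Color → Color
  | .white => .black
  | .black => .white

/-- Checkers terms (considered modulo α-conversion). -/
inductive Tm where
  | var : Var → Tm
  | lam : Color → Var → Tm → Tm
  | app : Color → Tm → Tm → Tm

/-- Substitution t{u/x} (capture avoided by the modulo-α convention). -/
def Tm.subst (x : Var) (u : Tm) : Tm → Tm
  | .var y => if y = x then u else .var y
  | .lam c y t => if y = x then .lam c y t else .lam c y (Tm.subst x u t)
  | .app c t s => .app c (Tm.subst x u t) (Tm.subst x u s)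

/-- Silent root step: (λ_c x. t) ·_c u ↦τ t{u/x}. -/
inductive RootSilent : Tm → Tm → Prop where
  | mk (c : Color) (x : Var) (t u : Tm) :
      RootSilent (.app c (.lam c x t) u) (Tm.subst x u t)

/-- Interaction root step: (λ_c x. t) ·_{c⊥} u ↦ι t{u/x}. -/
inductive RootInter : Tm → Tm → Prop where
  | mk (c : Color) (x : Var) (t u : Tm) :
      RootInter (.app c.flip (.lam c x t) u) (Tm.subst x u t)

/-- Closure of a relation under applicative contexts ⟨·⟩ ·_{d₁} t₁ ⋯ ·_{dₘ} tₘ. -/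
inductive AppClos (R : Tm → Tm → Prop) : Tm → Tm → Prop where
  | root {t u : Tm} : R t u → AppClos R t u
  | app {t u : Tm} (c : Color) (s : Tm) : AppClos R t u → AppClos R (.app c t s) (.app c u s)

/-- Closure of a relation under head contexts λ_{c₁}x₁…λ_{cₙ}xₙ.⟨·⟩ ·_{d₁} t₁ ⋯ ·_{dₘ} tₘ. -/
inductive HeadClos (R : Tm → Tm → Prop) : Tm → Tm → Prop where
  | base {t u : Tm} : AppClos R t u → HeadClos R t u
  | lam {t u : Tm} (c : Color) (x : Var) : HeadClos R t u → HeadClos R (.lam c x t) (.lam c x u)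

/-- Silent head step →hτ. -/
def HStepSilent : Tm → Tm → Prop := HeadClos RootSilent
/-- Interaction head step →hι. -/
def HStepInter : Tm → Tm → Prop := HeadClos RootInter
/-- Checkers head step →hch = →hτ ∪ →hι. -/
def HStep (t u : Tm) : Prop := HStepSilent t u ∨ HStepInter t u

/-- t ⇓ι^k : the head-reduction sequence from t reaches a →hch-normal form
and contains exactly k interaction steps. -/
inductive Evals : Tm → ℕ → Prop where
  | nf {t : Tm} : (∀ u, ¬ HStep t u) → Evals t 0
  | silent {t u : Tm} {k : ℕ} : HStepSilent t u → Evals u k → Evals t k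
  | inter {t u : Tm} {k : ℕ} : HStepInter t u → Evals u k → Evals t (k + 1)

/-- Linear types: atoms and colored arrows M →_c L (multi types as lists). -/
inductive LinTy where
  | atom : ℕ → LinTy
  | arr : List LinTy → Color → LinTy → LinTy

/-- Multi types: finite multisets [L₁,…,Lₙ] of linear types (represented as lists). -/
abbrev MTy := List LinTy

/-- Either a linear type or a multi type. -/
inductive GTy where
  | lin : LinTy → GTy
  | multi : MTy → GTy

/-- Type environments. -/
abbrev Env := Var → MTy

/-- Pointwise (multiset) union Γ ⊎ Δ of environments. -/
def Env.union (Γ Δ : Env) : Env := fun x => Γ x ++ Δ x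
/-- The empty environment. -/
def Env.empty : Env := fun _ => []
/-- The environment x : M. -/
def Env.single (x : Var) (M : MTy) : Env := fun y => if y = x then M else []
/-- Environment update: (Γ, x:M) when Γ x is empty. -/
def Env.update (Γ : Env) (x : Var) (M : MTy) : Env := fun y => if y = x then M else Γ y

/-- Dual Kronecker delta δ̄(c,d): 0 if the colors agree, 1 otherwise. -/
def costOf (c d : Color) : ℕ := if c = d then 0 else 1

/-- Typing judgments Γ ⊢ₖ t : T of the checkers multi type system,
additionally indexed by the applicative size (number of @ rules) of the derivation. -/
inductive Ty : Env → ℕ → Tm → GTy → ℕ → Prop where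
  | ax (x : Var) (L : LinTy) :
      Ty (Env.single x [L]) 0 (.var x) (.lin L) 0
  | many_nil (t : Tm) :
      Ty Env.empty 0 t (.multi []) 0
  | many_cons {Γ Δ : Env} {k k' : ℕ} {t : Tm} {L : LinTy} {M : MTy} {s s' : ℕ} :
      Ty Γ k t (.lin L) s → Ty Δ k' t (.multi M) s' →
      Ty (Env.union Γ Δ) (k + k') t (.multi (L :: M)) (s + s')
  | lam {Γ : Env} {k : ℕ} {t : Tm} {L : LinTy} {s : ℕ} (c : Color) (x : Var) :
      Ty Γ k t (.lin L) s →
      Ty (Env.update Γ x []) k (.lam c x t) (.lin (.arr (Γ x) c L)) s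
  | app {Γ Δ : Env} {k₁ k₂ : ℕ} {t u : Tm} {M : MTy} {c : Color} {L : LinTy} {s₁ s₂ : ℕ}
      (d : Color) :
      Ty Γ k₁ t (.lin (.arr M c L)) s₁ → Ty Δ k₂ u (.multi M) s₂ →
      Ty (Env.union Γ Δ) (k₁ + k₂ + costOf c d) (.app d t u) (.lin L) (s₁ + s₂ + 1)

/-- Γ ⊢ₖ t : T is derivable (for some derivation/size). -/
def HasTy (Γ : Env) (k : ℕ) (t : Tm) (T : GTy) : Prop := ∃ s, Ty Γ k t T s

/-- Polarities. -/
inductive Pol where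
  | pos
  | neg
deriving DecidableEq

/-- The opposite polarity. -/
def Pol.flip : Pol → Pol
  | .pos => .neg
  | .neg => .pos

mutual
  /-- Polarized whitening on linear types: `WhiterL p k L' L` means L' ⊑^p_k L. -/
  inductive WhiterL : Pol → ℕ → LinTy → LinTy → Prop where
    | atom (p : Pol) (a : ℕ) : WhiterL p 0 (.atom a) (.atom a)
    | whiten {k₁ k₂ : ℕ} {M' M : List LinTy} {L' L : LinTy} :
        WhiterM .neg k₁ M' M → WhiterL .pos k₂ L' L →
        WhiterL .pos (k₁ + k₂ + 1) (.arr M' .white L') (.arr M .black L)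
    | congr {p : Pol} {k₁ k₂ : ℕ} {M' M : List LinTy} {L' L : LinTy} (c : Color) :
        WhiterM p.flip k₁ M' M → WhiterL p k₂ L' L →
        WhiterL p (k₁ + k₂) (.arr M' c L') (.arr M c L)

  /-- Polarized whitening on multi types (componentwise, summing the costs). -/
  inductive WhiterM : Pol → ℕ → List LinTy → List LinTy → Prop where
    | nil (p : Pol) : WhiterM p 0 [] []
    | cons {p : Pol} {k k' : ℕ} {L' L : LinTy} {M' M : List LinTy} :
        WhiterL p k L' L → WhiterM p k' M' M →
        WhiterM p (k + k') (L' :: M') (L :: M)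
end

/-- Polarized whitening on environments (pointwise, with finitely many nonzero costs). -/
def WhiterE (p : Pol) (k : ℕ) (Γ' Γ : Env) : Prop :=
  ∃ f : Var →₀ ℕ, (∀ x, WhiterM p (f x) (Γ' x) (Γ x)) ∧ k = f.sum fun _ n => n

/-- Polarized whitening on pairs: (Γ',L') ⊑^p_k (Γ,L) iff Γ' ⊑^{p°}_{k₁} Γ and L' ⊑^p_{k₂} L
with k = k₁ + k₂. -/
def WhiterP (p : Pol) (k : ℕ) (Γ' : Env) (L' : LinTy) (Γ : Env) (L : LinTy) : Prop :=
  ∃ k₁ k₂, k = k₁ + k₂ ∧ WhiterE p.flip k₁ Γ' Γ ∧ WhiterL p k₂ L' L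

/-- Ordinary λ-terms. -/
inductive LTm where
  | var : Var → LTm
  | lam : Var → LTm → LTm
  | app : LTm → LTm → LTm

/-- Substitution on λ-terms. -/
def LTm.subst (x : Var) (u : LTm) : LTm → LTm
  | .var y => if y = x then u else .var y
  | .lam y t => if y = x then .lam y t else .lam y (LTm.subst x u t)
  | .app t s => .app (LTm.subst x u t) (LTm.subst x u s)

/-- Root β-step. -/
inductive LRoot : LTm → LTm → Prop where
  | mk (x : Var) (t u : LTm) : LRoot (.app (.lam x t) u) (LTm.subst x u t)

inductive LAppClos (R : LTm → LTm → Prop) : LTm → LTm → Prop where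
  | root {t u : LTm} : R t u → LAppClos R t u
  | app {t u : LTm} (s : LTm) : LAppClos R t u → LAppClos R (.app t s) (.app u s)

inductive LHeadClos (R : LTm → LTm → Prop) : LTm → LTm → Prop where
  | base {t u : LTm} : LAppClos R t u → LHeadClos R t u
  | lam {t u : LTm} (x : Var) : LHeadClos R t u → LHeadClos R (.lam x t) (.lam x u)

/-- Head β-reduction step on λ-terms. -/
def LHStep : LTm → LTm → Prop := LHeadClos LRoot
/-- Head normal forms. -/
def LIsHnf (t : LTm) : Prop := ∀ u, ¬ LHStep t u
/-- Many-step head reduction. -/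
def HeadReduces (t h : LTm) : Prop := Relation.ReflTransGen LHStep t h
/-- t has a head normal form. -/
def HasHnf (t : LTm) : Prop := ∃ h, HeadReduces t h ∧ LIsHnf h

/-- λx₁…xₙ.t -/
def lams : List Var → LTm → LTm
  | [], t => t
  | x :: xs, t => .lam x (lams xs t)

/-- t u₁ ⋯ uₖ -/
def apps : LTm → List LTm → LTm
  | t, [] => t
  | t, u :: us => apps (.app t u) us

/-- x occurs free in t. -/
def LFree (x : Var) : LTm → Prop
  | .var y => y = x
  | .lam y t => y ≠ x ∧ LFree x t
  | .app t u => LFree x t ∨ LFree x u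

/-- The (Hη_red) clause: t head-reduces to λx₁…x_{n+p}. y t₁…t_{k+p},
u head-reduces to λx₁…xₙ. y u₁…u_k, with R tᵢ uᵢ (i ≤ k), R t_{k+i} x_{n+i},
and the extra abstracted variables fresh for y u₁…u_k. -/
def HEtaL (R : LTm → LTm → Prop) (t u : LTm) : Prop :=
  ∃ (xs zs : List Var) (y : Var) (ts ts' us : List LTm),
    HeadReduces t (lams (xs ++ zs) (apps (.var y) (ts ++ ts'))) ∧
    HeadReduces u (lams xs (apps (.var y) us)) ∧
    List.Forall₂ R ts us ∧
    List.Forall₂ (fun a z => R a (.var z)) ts' zs ∧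
    (∀ z ∈ zs, ¬ LFree z (apps (.var y) us))

/-- The clause symmetric to (Hη_red), allowing η-expansions on the u side. -/
def HEtaR (R : LTm → LTm → Prop) (t u : LTm) : Prop :=
  ∃ (xs zs : List Var) (y : Var) (ts us us' : List LTm),
    HeadReduces t (lams xs (apps (.var y) ts)) ∧
    HeadReduces u (lams (xs ++ zs) (apps (.var y) (us ++ us'))) ∧
    List.Forall₂ R ts us ∧
    List.Forall₂ (fun z a => R (.var z) a) zs us' ∧
    (∀ z ∈ zs, ¬ LFree z (apps (.var y) ts))

/-- The Böhm preorder up to η-reductions ⊑η↓: the largest relation closed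
under (bot) and (Hη_red), defined as a greatest fixed point. -/
def EtaRedLe (t u : LTm) : Prop :=
  ∃ R : LTm → LTm → Prop,
    (∀ a b, R a b → (¬ HasHnf a) ∨ HEtaL R a b) ∧ R t u

/-- The Böhm preorder up to possibly infinite η-conversion ⊑Bη: the largest
relation closed under (bot), (Hη_red) and its symmetric clause. -/
def BohmEtaLe (t u : LTm) : Prop :=
  ∃ R : LTm → LTm → Prop,
    (∀ a b, R a b → (¬ HasHnf a) ∨ HEtaL R a b ∨ HEtaR R a b) ∧ R t u

/-- The c-painting of an ordinary λ-term. -/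
def paint (c : Color) : LTm → Tm
  | .var x => .var x
  | .lam x t => .lam c x (paint c t)
  | .app t u => .app c (paint c t) (paint c u)

/-- λ-calculus contexts. -/
inductive LCtx where
  | hole : LCtx
  | lam : Var → LCtx → LCtx
  | appL : LCtx → LTm → LCtx
  | appR : LTm → LCtx → LCtx

/-- Paint a λ-calculus context with color c (hole unchanged) and fill its hole
with a checkers term. -/
def LCtx.paintFill (c : Color) : LCtx → Tm → Tm
  | .hole, s => s
  | .lam x C, s => .lam c x (C.paintFill c s)
  | .appL C u, s => .app c (C.paintFill c s) (paint c u)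
  | .appR t C, s => .app c (paint c t) (C.paintFill c s)

/-- Checkers contexts. -/
inductive Ctx where
  | hole : Ctx
  | lam : Color → Var → Ctx → Ctx
  | appL : Color → Ctx → Tm → Ctx
  | appR : Color → Tm → Ctx → Ctx

/-- Filling the hole of a checkers context (possibly capturing free variables). -/
def Ctx.fill : Ctx → Tm → Tm
  | .hole, s => s
  | .lam c x C, s => .lam c x (C.fill s)
  | .appL c C u, s => .app c (C.fill s) u
  | .appR c t C, s => .app c t (C.fill s)

/-- Interaction improvement ⊑imp on checkers terms. -/
def Imp (t u : Tm) : Prop :=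
  ∀ (C : Ctx) (k : ℕ), Evals (C.fill t) k → ∃ k' ≤ k, Evals (C.fill u) k'

/-- Polarized whiter-cheaper improvement ⊑pwc on checkers terms. -/
def PWC (t u : Tm) : Prop :=
  ∀ (Γ : Env) (L : LinTy) (k : ℕ), HasTy Γ k t (.lin L) →
    ∃ (Γ' : Env) (L' : LinTy) (k' d : ℕ),
      HasTy Γ' k' u (.lin L') ∧ WhiterP .pos d Γ' L' Γ L ∧ k' + d ≤ k

/-! ### Whitening on types -/

mutual
theorem WhiterL.refl (p : Pol) : (L : LinTy) → WhiterL p 0 L L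
  | .atom a => .atom p a
  | .arr M c L => .congr c (WhiterM.refl p.flip M) (WhiterL.refl p L)
theorem WhiterM.refl (p : Pol) : (M : List LinTy) → WhiterM p 0 M M
  | [] => .nil p
  | L :: M => .cons (WhiterL.refl p L) (WhiterM.refl p M)
end

mutual
/-- The number of black arrows in a linear type. -/
def blackL : LinTy → ℕ
  | .atom _ => 0
  | .arr M c L => blackM M + blackL L + costOf c .white
/-- The number of black arrows in a multi type. -/
def blackM : List LinTy → ℕ
  | [] => 0
  | L :: M => blackL L + blackM M
end

mutual
/-- The cost of a whitening is the number of black arrows it turns white. -/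
theorem WhiterL.black {p : Pol} {k : ℕ} {A B : LinTy} :
    WhiterL p k A B → blackL A + k = blackL B
  | .atom _ _ => rfl
  | .whiten hM hL => by
      have h₁ := WhiterM.black hM
      have h₂ := WhiterL.black hL
      simp only [blackL, costOf, if_true, reduceCtorEq, if_false]
      omega
  | .congr c hM hL => by
      have h₁ := WhiterM.black hM
      have h₂ := WhiterL.black hL
      simp only [blackL]
      omega
theorem WhiterM.black {p : Pol} {k : ℕ} {A B : List LinTy} :
    WhiterM p k A B → blackM A + k = blackM B
  | .nil _ => rfl
  | .cons hL hM => by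
      have h₁ := WhiterM.black hM
      have h₂ := WhiterL.black hL
      simp only [blackM]
      omega
end

mutual
theorem WhiterL.eq_of_zero {p : Pol} {k : ℕ} {A B : LinTy} :
    WhiterL p k A B → k = 0 → A = B
  | .atom _ _, _ => rfl
  | .whiten _ _, h => by omega
  | .congr c hM hL, h => by
      rw [WhiterM.eq_of_zero hM (by omega), WhiterL.eq_of_zero hL (by omega)]
theorem WhiterM.eq_of_zero {p : Pol} {k : ℕ} {A B : List LinTy} :
    WhiterM p k A B → k = 0 → A = B
  | .nil _, _ => rfl
  | .cons hL hM, h => by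
      rw [WhiterM.eq_of_zero hM (by omega), WhiterL.eq_of_zero hL (by omega)]
end

mutual
theorem WhiterL.trans {p : Pol} {a b : ℕ} {A B C : LinTy} :
    WhiterL p a A B → WhiterL p b B C → WhiterL p (a + b) A C
  | h, .atom _ _ => h
  | .congr _ hM hL, .whiten hM' hL' => by
      have := WhiterL.whiten (WhiterM.trans hM hM') (WhiterL.trans hL hL')
      convert this using 1
      omega
  | .whiten hM hL, .congr _ hM' hL' => by
      have := WhiterL.whiten (WhiterM.trans hM hM') (WhiterL.trans hL hL')
      convert this using 1
      omega
  | .congr c hM hL, .congr _ hM' hL' => by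
      have := WhiterL.congr c (WhiterM.trans hM hM') (WhiterL.trans hL hL')
      convert this using 1
      omega
theorem WhiterM.trans {p : Pol} {a b : ℕ} {A B C : List LinTy} :
    WhiterM p a A B → WhiterM p b B C → WhiterM p (a + b) A C
  | h, .nil _ => h
  | .cons hL hM, .cons hL' hM' => by
      have := WhiterM.cons (WhiterL.trans hL hL') (WhiterM.trans hM hM')
      convert this using 1
      omega
end

mutual
/-- Whitenings of opposite polarities act on disjoint occurrences of arrows, so that they
commute, each keeping its cost. -/
theorem WhiterL.diamond {p q : Pol} (hq : q = p.flip) {a b : ℕ} {A B L : LinTy} :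
    WhiterL p a A L → WhiterL q b B L → ∃ C, WhiterL q b C A ∧ WhiterL p a C B
  | .atom _ n, .atom _ _ => ⟨.atom n, .atom _ n, .atom _ n⟩
  | .whiten _ _, .whiten _ _ => by cases hq
  | .whiten hM hL, .congr _ hM' hL' => by
      subst hq
      obtain ⟨M, h₁, h₂⟩ := WhiterM.diamond rfl hM hM'
      obtain ⟨C, h₃, h₄⟩ := WhiterL.diamond rfl hL hL'
      exact ⟨.arr M .white C, .congr _ h₁ h₃, .whiten h₂ h₄⟩
  | .congr _ hM hL, .whiten hM' hL' => by
      obtain ⟨M, h₁, h₂⟩ := WhiterM.diamond (by rw [← hq]; rfl) hM hM'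
      obtain ⟨C, h₃, h₄⟩ := WhiterL.diamond hq hL hL'
      exact ⟨.arr M .white C, .whiten h₁ h₃, .congr _ h₂ h₄⟩
  | .congr c hM hL, .congr _ hM' hL' => by
      obtain ⟨M, h₁, h₂⟩ := WhiterM.diamond (by rw [hq]) hM hM'
      obtain ⟨C, h₃, h₄⟩ := WhiterL.diamond hq hL hL'
      exact ⟨.arr M c C, .congr _ h₁ h₃, .congr _ h₂ h₄⟩
theorem WhiterM.diamond {p q : Pol} (hq : q = p.flip) {a b : ℕ} {A B L : List LinTy} :
    WhiterM p a A L → WhiterM q b B L → ∃ C, WhiterM q b C A ∧ WhiterM p a C B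
  | .nil _, .nil _ => ⟨[], .nil _, .nil _⟩
  | .cons hL hM, .cons hL' hM' => by
      obtain ⟨M, h₁, h₂⟩ := WhiterM.diamond hq hM hM'
      obtain ⟨C, h₃, h₄⟩ := WhiterL.diamond hq hL hL'
      exact ⟨C :: M, .cons h₃ h₁, .cons h₄ h₂⟩
end

theorem WhiterM.append {p : Pol} {a b : ℕ} {A B C D : List LinTy}
    (h : WhiterM p a A B) (h' : WhiterM p b C D) : WhiterM p (a + b) (A ++ C) (B ++ D) := by
  induction B generalizing A a with
  | nil => cases h; simpa using h'
  | cons L B ih =>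
    cases h with
    | cons hL hM =>
      rw [add_assoc]
      exact .cons hL (ih hM)

theorem WhiterM.split {p : Pol} {k : ℕ} {M A B : List LinTy} (h : WhiterM p k M (A ++ B)) :
    ∃ A' B' a b, M = A' ++ B' ∧ k = a + b ∧ WhiterM p a A' A ∧ WhiterM p b B' B := by
  induction A generalizing M k with
  | nil => exact ⟨[], M, 0, k, rfl, by simp, .nil p, h⟩
  | cons L A ih =>
    cases h with
    | cons hL hM =>
      obtain ⟨A', B', a, b, rfl, rfl, hA, hB⟩ := ih hM
      exact ⟨_ :: A', B', _, b, rfl, (add_assoc _ _ _).symm, .cons hL hA, hB⟩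

/-! ### Whitening on environments -/

theorem WhiterE.refl (p : Pol) (Γ : Env) : WhiterE p 0 Γ Γ :=
  ⟨0, fun x => WhiterM.refl p (Γ x), by simp⟩

theorem sum_add_id (f g : Var →₀ ℕ) :
    ((f + g).sum fun _ n => n) = (f.sum fun _ n => n) + g.sum fun _ n => n :=
  Finsupp.sum_add_index' (fun _ => rfl) (fun _ _ _ => rfl)

theorem WhiterE.trans {p : Pol} {a b : ℕ} {A B C : Env}
    (h : WhiterE p a A B) (h' : WhiterE p b B C) : WhiterE p (a + b) A C := by
  obtain ⟨f, hf, rfl⟩ := h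
  obtain ⟨g, hg, rfl⟩ := h'
  exact ⟨f + g, fun x => (hf x).trans (hg x), (sum_add_id f g).symm⟩

theorem WhiterE.union {p : Pol} {a b : ℕ} {A B C D : Env}
    (h : WhiterE p a A B) (h' : WhiterE p b C D) :
    WhiterE p (a + b) (A.union C) (B.union D) := by
  obtain ⟨f, hf, rfl⟩ := h
  obtain ⟨g, hg, rfl⟩ := h'
  exact ⟨f + g, fun x => (hf x).append (hg x), (sum_add_id f g).symm⟩

theorem WhiterE.split {p : Pol} {k : ℕ} {Θ Γ Δ : Env} (h : WhiterE p k Θ (Γ.union Δ)) :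
    ∃ Γ' Δ' a b, Θ = Env.union Γ' Δ' ∧ k = a + b ∧ WhiterE p a Γ' Γ ∧ WhiterE p b Δ' Δ := by
  obtain ⟨f, hf, rfl⟩ := h
  choose A B a b hAB hab hA hB using fun x => WhiterM.split (hf x)
  let fa : Var →₀ ℕ := Finsupp.onFinset f.support a fun x hx => by
    rw [Finsupp.mem_support_iff, hab]; omega
  let fb : Var →₀ ℕ := Finsupp.onFinset f.support b fun x hx => by
    rw [Finsupp.mem_support_iff, hab]; omega
  have hfab : f = fa + fb := by ext x; exact hab x
  exact ⟨A, B, fa.sum fun _ n => n, fb.sum fun _ n => n, funext hAB, by rw [hfab, sum_add_id],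
    ⟨fa, hA, rfl⟩, ⟨fb, hB, rfl⟩⟩

theorem WhiterE.single {p : Pol} {k : ℕ} {x : Var} {L' L : LinTy} (h : WhiterL p k L' L) :
    WhiterE p k (Env.single x [L']) (Env.single x [L]) := by
  refine ⟨Finsupp.single x k, fun y => ?_, by simp⟩
  by_cases hy : y = x
  · subst hy
    simpa [Env.single] using WhiterM.cons h (.nil p)
  · simpa [Env.single, hy, Finsupp.single_apply, Ne.symm hy] using WhiterM.nil p

theorem WhiterM.of_nil {p : Pol} {k : ℕ} {M : List LinTy} (h : WhiterM p k M []) :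
    M = [] ∧ k = 0 := by
  cases h; exact ⟨rfl, rfl⟩

/-- A whitening of `x : [L]` is `x : [L']` for a whitening `L'` of `L`. -/
theorem WhiterE.of_single {p : Pol} {k : ℕ} {x : Var} {Γ : Env} {L : LinTy}
    (h : WhiterE p k Γ (Env.single x [L])) :
    ∃ L', Γ = Env.single x [L'] ∧ WhiterL p k L' L := by
  obtain ⟨f, hf, rfl⟩ := h
  have hne : ∀ y, y ≠ x → Γ y = [] ∧ f y = 0 := fun y hy => by
    have := hf y
    simp only [Env.single, hy, if_false] at this
    exact this.of_nil
  have hs : f = Finsupp.single x (f x) := by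
    ext y
    by_cases hy : y = x
    · simp [hy]
    · simp [Ne.symm hy, (hne y hy).2]
  have hx := hf x
  simp only [Env.single, if_true] at hx
  rw [hs, Finsupp.sum_single_index rfl]
  generalize hM : Γ x = M at hx
  generalize f x = n at hx
  cases hx with
  | cons hL hN =>
    cases hN
    refine ⟨_, ?_, hL⟩
    funext y
    by_cases hy : y = x
    · simp [Env.single, hy, hM]
    · simp [Env.single, hy, (hne y hy).1]

theorem WhiterE.update {p : Pol} {k m : ℕ} {Γ' Γ : Env} {x : Var} {M : MTy}
    (h : WhiterE p k Γ' (Γ.update x [])) (hM : WhiterM p m M (Γ x)) :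
    WhiterE p (k + m) (Γ'.update x M) Γ ∧ Γ' x = [] := by
  obtain ⟨f, hf, rfl⟩ := h
  have hx : Γ' x = [] ∧ f x = 0 := by
    have := hf x
    simp only [Env.update, if_true] at this
    exact this.of_nil
  refine ⟨⟨f + Finsupp.single x m, fun y => ?_, ?_⟩, hx.1⟩
  · by_cases hy : y = x
    · subst hy
      simpa [Env.update, hx.2] using hM
    · have := hf y
      simp only [Env.update, hy, if_false] at this
      simpa [Env.update, hy, Finsupp.single_apply, Ne.symm hy] using this
  · rw [sum_add_id, Finsupp.sum_single_index rfl]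

theorem WhiterE.of_update {p : Pol} {k : ℕ} {Γ' Γ : Env} {x : Var} {M : MTy}
    (h : WhiterE p k Γ' (Γ.update x M)) (hx : Γ x = []) :
    ∃ a m, k = a + m ∧ WhiterE p a (Γ'.update x []) Γ ∧ WhiterM p m (Γ' x) M := by
  obtain ⟨f, hf, rfl⟩ := h
  refine ⟨(f.erase x).sum fun _ n => n, f x, ?_, ⟨f.erase x, fun y => ?_, rfl⟩, ?_⟩
  · conv_lhs => rw [← Finsupp.erase_add_single x f]
    rw [sum_add_id, Finsupp.sum_single_index rfl]
  · by_cases hy : y = x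
    · subst hy
      simpa [Env.update, hx] using WhiterM.nil p
    · have := hf y
      simp only [Env.update, hy, if_false] at this
      simpa [Env.update, hy] using this
  · have := hf x
    simpa only [Env.update, if_true] using this

/-! ### Repainting derivations -/

/-- Repaintability of `t` at linear types, with the costs on the environment and on the type
kept apart: every whitening of the environment at positive polarity (cost `a`) and of the type
at negative polarity (cost `b`) can be answered by a typing that is whiter at the opposite
polarities, where the answer's cost plus the variation of the typing index is at most `a + b`. -/
def Repaintable (t : Tm) : Prop :=
  ∀ (Γ Γ' : Env) (L L' : LinTy) (k a b : ℕ), HasTy Γ k t (.lin L) →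
    WhiterE .pos a Γ' Γ → WhiterL .neg b L' L →
    ∃ (Γ'' : Env) (L'' : LinTy) (k' a' b' : ℕ), HasTy Γ'' k' t (.lin L'') ∧
      WhiterE .neg a' Γ'' Γ' ∧ WhiterL .pos b' L'' L' ∧ Nat.dist k k' + a' + b' ≤ a + b

/-- The corresponding property at multi types, obtained one linear type at a time: the
environment of a multi typing, and hence any whitening of it, splits along its premises. -/
theorem Repaintable.multi {t : Tm} (ht : Repaintable t) (M : MTy) :
    ∀ (Γ Γ' : Env) (M' : MTy) (k a b : ℕ), HasTy Γ k t (.multi M) →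
    WhiterE .pos a Γ' Γ → WhiterM .neg b M' M →
    ∃ (Γ'' : Env) (M'' : MTy) (k' a' b' : ℕ), HasTy Γ'' k' t (.multi M'') ∧
      WhiterE .neg a' Γ'' Γ' ∧ WhiterM .pos b' M'' M' ∧ Nat.dist k k' + a' + b' ≤ a + b := by
  induction M with
  | nil =>
    rintro Γ Γ' M' k a b ⟨s, hty⟩ hΓ hM
    cases hM
    cases hty
    have hΓ' : Γ' = Env.empty := by
      obtain ⟨f, hf, -⟩ := hΓ
      funext x
      exact (hf x).of_nil.1
    subst hΓ'
    exact ⟨_, [], 0, 0, 0, ⟨0, .many_nil t⟩, .refl _ _, .nil _, by simp⟩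
  | cons L M ih =>
    rintro Γ Γ' M' k a b ⟨s, hty⟩ hΓ hM
    cases hM with
    | cons hL hM =>
      cases hty with
      | many_cons h₁ h₂ =>
        obtain ⟨Γ₁, Γ₂, a₁, a₂, rfl, rfl, hΓ₁, hΓ₂⟩ := hΓ.split
        obtain ⟨Γ₁', L'', k₁, c₁, d₁, ⟨s₁, h₁'⟩, hE₁, hL₁, hd₁⟩ :=
          ht _ _ _ _ _ _ _ ⟨_, h₁⟩ hΓ₁ hL
        obtain ⟨Γ₂', M'', k₂, c₂, d₂, ⟨s₂, h₂'⟩, hE₂, hM₂, hd₂⟩ :=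
          ih _ _ _ _ _ _ ⟨_, h₂⟩ hΓ₂ hM
        refine ⟨_, _, _, _, _, ⟨_, .many_cons h₁' h₂'⟩, hE₁.union hE₂, .cons hL₁ hM₂, ?_⟩
        simp only [Nat.dist] at *
        omega

theorem repaintable_var (x : Var) : Repaintable (.var x) := by
  rintro Γ Γ' L L' k a b ⟨s, hty⟩ hΓ hL
  cases hty
  obtain ⟨L₁, rfl, hL₁⟩ := hΓ.of_single
  obtain ⟨C, h₁, h₂⟩ := WhiterL.diamond rfl hL₁ hL
  exact ⟨_, C, 0, b, a, ⟨0, .ax x C⟩, .single h₁, h₂, by simp [Nat.dist, add_comm]⟩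

theorem Repaintable.lam {t : Tm} (ht : Repaintable t) (c : Color) (x : Var) :
    Repaintable (.lam c x t) := by
  rintro Γ Γ' L L' k a b ⟨s, hty⟩ hΓ hL
  cases hty with
  | lam _ _ h =>
    cases hL with
    | congr _ hM hL =>
      obtain ⟨hE, hx⟩ := hΓ.update hM
      obtain ⟨Γ'', L'', k', a', b', ⟨s', h'⟩, hE', hL', hd⟩ := ht _ _ _ _ _ _ _ ⟨_, h⟩ hE hL
      obtain ⟨a₁, m, rfl, hE₁, hM₁⟩ := hE'.of_update hx
      exact ⟨_, _, k', a₁, m + b', ⟨_, .lam c x h'⟩, hE₁, .congr c hM₁ hL', by omega⟩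

/-- An arrow is whitened at positive polarity by whitening its components and possibly,
at cost `w`, its own color, which moves its distance to any color `d` by at most `w`. -/
theorem WhiterL.of_arr_pos {k : ℕ} {A L : LinTy} {M : MTy} {c : Color}
    (h : WhiterL .pos k A (.arr M c L)) :
    ∃ M' c' L' m b w, A = .arr M' c' L' ∧ k = m + b + w ∧ WhiterM .neg m M' M ∧
      WhiterL .pos b L' L ∧ ∀ d, Nat.dist (costOf c d) (costOf c' d) ≤ w := by
  cases h with
  | whiten hM hL =>
    exact ⟨_, _, _, _, _, 1, rfl, rfl, hM, hL, by intro d; cases d <;> decide⟩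
  | congr _ hM hL => exact ⟨_, _, _, _, _, 0, rfl, rfl, hM, hL, by simp [Nat.dist]⟩

/-- The negotiation between function and argument in an application. The argument is typed
with `M'`, a whitening of the type `M` that the function expects. The function answers
with a whitening of `M'`; a nontrivial one is passed to the argument, whose answer is
passed back. Each such round removes a black arrow from `M'`, and the costs exchanged in it
telescope. -/
theorem app_loop {t u : Tm} (ht : Repaintable t) (hu : Repaintable u) (d : Color) (n : ℕ) :
    ∀ (c : Color) (Γ Γ' Δ : Env) (M M' : MTy) (L L' : LinTy) (k₁ k₂ a m b : ℕ),
      blackM M' ≤ n → HasTy Γ k₁ t (.lin (.arr M c L)) → HasTy Δ k₂ u (.multi M') →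
      WhiterE .pos a Γ' Γ → WhiterM .pos m M' M → WhiterL .neg b L' L →
      ∃ (Γ'' Δ'' : Env) (L'' : LinTy) (k' a' e' b' : ℕ),
        HasTy (Γ''.union Δ'') k' (.app d t u) (.lin L'') ∧
        WhiterE .neg a' Γ'' Γ' ∧ WhiterE .neg e' Δ'' Δ ∧ WhiterL .pos b' L'' L' ∧
        Nat.dist (k₁ + k₂ + costOf c d) k' + a' + e' + b' ≤ a + m + b := by
  induction n using Nat.strong_induction_on with
  | _ n ih =>
    intro c Γ Γ' Δ M M' L L' k₁ k₂ a m b hn hty hty' hΓ hM hL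
    obtain ⟨Γ₁, A, k₁', a₁, b₁, hty₁, hΓ₁, hA, hd₁⟩ :=
      ht _ _ _ _ _ _ _ hty hΓ (.congr c hM hL)
    obtain ⟨M₁, c₁, L₁, m₁, b₁, w, rfl, rfl, hM₁, hL₁, hw⟩ := hA.of_arr_pos
    have hwd := hw d
    by_cases hm : m₁ = 0
    · obtain rfl := hM₁.eq_of_zero hm
      obtain ⟨s, h⟩ := hty₁
      obtain ⟨s', h'⟩ := hty'
      refine ⟨Γ₁, Δ, L₁, _, a₁, 0, b₁, ⟨_, .app d h h'⟩, hΓ₁, .refl _ _, hL₁, ?_⟩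
      simp only [Nat.dist] at *
      omega
    · obtain ⟨Δ₂, M₂, k₂', e₂, m₂, hty₂, hΔ₂, hM₂, hd₂⟩ :=
        hu.multi _ _ _ _ _ _ _ hty' (.refl _ _) hM₁
      have h₁ := hM₁.black
      have h₂ := hM₂.black
      obtain ⟨Γ₃, Δ₃, L₃, k₃, a₃, e₃, b₃, hty₃, hΓ₃, hΔ₃, hL₃, hd₃⟩ :=
        ih (blackM M₂) (by omega) c₁ Γ₁ Γ₁ Δ₂ M₁ M₂ L₁ L₁ _ _ 0 m₂ 0 le_rfl hty₁ hty₂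
          (.refl _ _) hM₂ (.refl _ _)
      refine ⟨Γ₃, Δ₃, L₃, k₃, _, _, _, hty₃, hΓ₃.trans hΓ₁, hΔ₃.trans hΔ₂, hL₃.trans hL₁, ?_⟩
      simp only [Nat.dist] at *
      omega

theorem Repaintable.app {t u : Tm} (ht : Repaintable t) (hu : Repaintable u) (d : Color) :
    Repaintable (.app d t u) := by
  rintro Γ Γ' L L' k a b ⟨s, hty⟩ hΓ hL
  cases hty with
  | app _ h₁ h₂ =>
    obtain ⟨Γ₁, Δ₁, a₁, a₂, rfl, rfl, hΓ₁, hΔ₁⟩ := hΓ.split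
    -- The argument first absorbs the whitening of its own environment.
    obtain ⟨Δ₂, M₂, k₂, e₂, m₂, hty₂, hΔ₂, hM₂, hd₂⟩ :=
      hu.multi _ _ _ _ _ _ _ ⟨_, h₂⟩ hΔ₁ (.refl _ _)
    obtain ⟨Γ₃, Δ₃, L₃, k₃, a₃, e₃, b₃, hty₃, hΓ₃, hΔ₃, hL₃, hd₃⟩ :=
      app_loop ht hu d _ _ _ _ _ _ _ _ _ _ _ _ _ _ le_rfl ⟨_, h₁⟩ hty₂ hΓ₁ hM₂ hL
    refine ⟨_, L₃, k₃, _, b₃, hty₃, hΓ₃.union (hΔ₃.trans hΔ₂), hL₃, ?_⟩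
    simp only [Nat.dist] at *
    omega

theorem repaintable (t : Tm) : Repaintable t := by
  induction t with
  | var x => exact repaintable_var x
  | lam c x t ih => exact ih.lam c x
  | app d t u iht ihu => exact iht.app ihu d

/-- Sequence of repaintings. -/
theorem sequence_of_repainting (t : Tm) (Γ Γ' : Env) (L L' : LinTy) (k k₁ : ℕ)
    (hty : HasTy Γ k t (.lin L)) (hw : WhiterP .neg k₁ Γ' L' Γ L) :
    ∃ (Γ'' : Env) (L'' : LinTy) (k' k₂ : ℕ), k₂ ≤ k₁ ∧
      HasTy Γ'' k' t (.lin L'') ∧ WhiterP .pos k₂ Γ'' L'' Γ' L' ∧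
      Nat.dist k k' ≤ k₁ - k₂ := by
  obtain ⟨a, b, rfl, hE, hL⟩ := hw
  obtain ⟨Γ'', L'', k', a', b', hty', hE', hL', hd⟩ := repaintable t _ _ _ _ _ _ _ hty hE hL
  exact ⟨Γ'', L'', k', a' + b', by omega, hty', ⟨a', b', rfl, hE', hL'⟩, by omega⟩
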